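/- arXiv:1404.3240 — 2 statements merged into one kernel-verified Lean document; each statement's English description precedes it below -/
import Mathlib

section
/- Let A = [[x, y],[z, w]] be a 2×2 matrix with strictly positive entries x, y, z, w > 0. Then τ₊(A) = 2 − xw/(yz) if xw ≤ yz, and τ₊(A) = 2 − yz/(xw) if xw ≥ yz; equivalently, τ₊(A) = 2 − min(xw/(yz), yz/(xw)). -/
open Matrix

/-- The set of atoms `𝒜₊(A)`: rank-at-most-one matrices `R` with `0 ≤ R ≤ A` entrywise. -/
noncomputable def Aplus {m n : Type*} [Fintype m] [Fintype n]
    (A : Matrix m n ℝ) : Set (Matrix m n ℝ) :=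
  {R | R.rank ≤ 1 ∧ ∀ i j, 0 ≤ R i j ∧ R i j ≤ A i j}

/-- `τ₊(A)`: supremum of `L(A)` over linear functionals `L` with `L ≤ 1` on `𝒜₊(A)`. -/
noncomputable def tauPlus {m n : Type*} [Fintype m] [Fintype n]
    (A : Matrix m n ℝ) : ℝ :=
  sSup {x | ∃ L : Matrix m n ℝ →ₗ[ℝ] ℝ, (∀ R ∈ Aplus A, L R ≤ 1) ∧ L A = x}

lemma rank_le_one_iff_aux (a b c d : ℝ) : (!![a, b; c, d]).rank ≤ 1 ↔ a * d = b * c := by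
  constructor
  · intro h
    by_contra hne
    have hu : IsUnit (!![a, b; c, d]) := by
      rw [Matrix.isUnit_iff_isUnit_det, Matrix.det_fin_two_of]
      exact isUnit_iff_ne_zero.mpr (sub_ne_zero.mpr hne)
    have := Matrix.rank_of_isUnit _ hu
    simp at this
    omega
  · intro h
    by_contra hlt
    have h2 : (!![a, b; c, d]).rank ≤ 2 := by
      simpa using Matrix.rank_le_card_width (!![a, b; c, d])
    have h3 : (!![a, b; c, d]).rank = 2 := by omega
    have hli : LinearIndependent ℝ (!![a, b; c, d]).row := by
      rw [linearIndependent_iff_card_eq_finrank_span, Set.finrank, ← Matrix.rank_eq_finrank_span_row, h3]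
      simp
    have hu := Matrix.linearIndependent_rows_iff_isUnit.mp hli
    rw [Matrix.isUnit_iff_isUnit_det, Matrix.det_fin_two_of] at hu
    exact hu.ne_zero (sub_eq_zero.mpr h)

/-- coordinates version of the value set. -/
def valSet (x y z w : ℝ) : Set ℝ :=
  {v | ∃ α β γ δ : ℝ, (∀ a b c d : ℝ, 0 ≤ a → a ≤ x → 0 ≤ b → b ≤ y → 0 ≤ c → c ≤ z →
    0 ≤ d → d ≤ w → a * d = b * c → α * a + β * b + γ * c + δ * d ≤ 1) ∧
    α * x + β * y + γ * z + δ * w = v}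

lemma lin_eq_aux (L : Matrix (Fin 2) (Fin 2) ℝ →ₗ[ℝ] ℝ) (a b c d : ℝ) :
    L !![a, b; c, d] = L !![1, 0; 0, 0] * a + L !![0, 1; 0, 0] * b + L !![0, 0; 1, 0] * c
      + L !![0, 0; 0, 1] * d := by
  have : !![a, b; c, d] = a • !![1, 0; 0, 0] + b • !![0, 1; 0, 0] + c • !![0, 0; 1, 0]
      + d • (!![0, 0; 0, 1] : Matrix (Fin 2) (Fin 2) ℝ) := by
    ext i j; fin_cases i <;> fin_cases j <;> simp
  rw [this]
  simp only [map_add, map_smul, smul_eq_mul]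
  ring

lemma tauPlus_eq_aux (x y z w : ℝ) : tauPlus !![x, y; z, w] = sSup (valSet x y z w) := by
  unfold tauPlus
  congr 1
  ext v
  constructor
  · rintro ⟨L, hL, hv⟩
    refine ⟨L !![1, 0; 0, 0], L !![0, 1; 0, 0], L !![0, 0; 1, 0], L !![0, 0; 0, 1], ?_, ?_⟩
    · intro a b c d h1 h2 h3 h4 h5 h6 h7 h8 h
      rw [← lin_eq_aux]
      refine hL _ ⟨(rank_le_one_iff_aux a b c d).mpr h, ?_⟩
      intro i j
      fin_cases i <;> fin_cases j <;> simp [*]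
    · rw [← lin_eq_aux, hv]
  · rintro ⟨α, β, γ, δ, hL, hv⟩
    let L : Matrix (Fin 2) (Fin 2) ℝ →ₗ[ℝ] ℝ :=
      { toFun := fun R => α * R 0 0 + β * R 0 1 + γ * R 1 0 + δ * R 1 1
        map_add' := by intro R S; simp only [Matrix.add_apply]; ring
        map_smul' := by
          intro r R
          simp only [Matrix.smul_apply, smul_eq_mul, RingHom.id_apply]; ring }
    refine ⟨L, ?_, ?_⟩
    · rintro R ⟨hr, hb⟩
      have e := Matrix.eta_fin_two R
      rw [e, rank_le_one_iff_aux] at hr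
      have h00 := hb 0 0
      have h01 := hb 0 1
      have h10 := hb 1 0
      have h11 := hb 1 1
      simp at h00 h01 h10 h11
      exact hL _ _ _ _ h00.1 h00.2 h01.1 h01.2 h10.1 h10.2 h11.1 h11.2 hr
    · simpa [L] using hv

lemma valSet_swap_sub (x y z w : ℝ) : valSet x y z w ⊆ valSet y x w z := by
  rintro v ⟨α, β, γ, δ, h, hv⟩
  refine ⟨β, α, δ, γ, ?_, by linarith⟩
  intro a b c d h1 h2 h3 h4 h5 h6 h7 h8 e
  have := h b a d c h3 h4 h1 h2 h7 h8 h5 h6 e.symm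
  linarith

lemma sSup_valSet (x y z w : ℝ) (hx : 0 < x) (hy : 0 < y) (hz : 0 < z) (hw : 0 < w)
    (hle : x * w ≤ y * z) : sSup (valSet x y z w) = 2 - x * w / (y * z) := by
  have hyz : 0 < y * z := mul_pos hy hz
  obtain ⟨s, hs⟩ : ∃ s, s = x * w / (y * z) := ⟨_, rfl⟩
  have hs0 : 0 ≤ s := by rw [hs]; positivity
  have hs1 : s ≤ 1 := by rw [hs]; exact (div_le_one hyz).mpr hle
  have hsm : s * (y * z) = x * w := by rw [hs]; field_simp
  rw [← hs]
  refine IsGreatest.csSup_eq ⟨⟨-(s / (2 * x)), 1 / y, 1 / z, -(s / (2 * w)), ?_, ?_⟩, ?_⟩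
  · intro a b c d h1 h2 h3 h4 h5 h6 h7 h8 e
    obtain ⟨p, rfl⟩ : ∃ p, a = p * x := ⟨a / x, by field_simp⟩
    obtain ⟨q, rfl⟩ : ∃ p, b = p * y := ⟨b / y, by field_simp⟩
    obtain ⟨r, rfl⟩ : ∃ p, c = p * z := ⟨c / z, by field_simp⟩
    obtain ⟨t, rfl⟩ : ∃ p, d = p * w := ⟨d / w, by field_simp⟩
    have p0 : 0 ≤ p := nonneg_of_mul_nonneg_left h1 hx
    have t0 : 0 ≤ t := nonneg_of_mul_nonneg_left h7 hw
    have p1 : p ≤ 1 := by nlinarith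
    have q1 : q ≤ 1 := by nlinarith
    have r1 : r ≤ 1 := by nlinarith
    have t1 : t ≤ 1 := by nlinarith
    have e2 : s * (p * t) = q * r := by
      apply mul_right_cancel₀ hyz.ne'
      linear_combination (p * t) * hsm + e
    have e3 : -(s / (2 * x)) * (p * x) + 1 / y * (q * y) + 1 / z * (r * z)
        + -(s / (2 * w)) * (t * w) = q + r - s * ((p + t) / 2) := by
      field_simp
      ring
    rw [e3]
    have h9 : q + r ≤ 1 + q * r := by nlinarith
    have h10 : p * t ≤ (p + t) / 2 := by nlinarith
    have h11 := mul_le_mul_of_nonneg_left h10 hs0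
    linarith
  · field_simp
    ring
  · rintro v ⟨α, β, γ, δ, h, rfl⟩
    have k1 := h x y (s * z) w hx.le le_rfl hy.le le_rfl (by positivity) (by nlinarith)
      hw.le le_rfl (by linarith)
    have k2 := h x (s * y) z w hx.le le_rfl (by positivity) (by nlinarith) hz.le le_rfl
      hw.le le_rfl (by linarith)
    have k3 := h 0 y 0 0 le_rfl hx.le hy.le le_rfl le_rfl hz.le le_rfl hw.le (by ring)
    have k4 := h 0 0 z 0 le_rfl hx.le le_rfl hy.le hz.le le_rfl le_rfl hw.le (by ring)
    have k5 := mul_le_mul_of_nonneg_left k3 (sub_nonneg.mpr hs1)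
    have k6 := mul_le_mul_of_nonneg_left k4 (sub_nonneg.mpr hs1)
    linarith


/-- closed-form formula for `τ₊` of a `2×2` matrix with strictly
positive entries: `τ₊([[x,y],[z,w]]) = 2 − min(xw/(yz), yz/(xw))`. -/
theorem stmt13 (x y z w : ℝ) (hx : 0 < x) (hy : 0 < y) (hz : 0 < z) (hw : 0 < w) :
    (x * w ≤ y * z → tauPlus !![x, y; z, w] = 2 - x * w / (y * z)) ∧
    (y * z ≤ x * w → tauPlus !![x, y; z, w] = 2 - y * z / (x * w)) ∧
    tauPlus !![x, y; z, w] = 2 - min (x * w / (y * z)) (y * z / (x * w)) := by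
  have A : x * w ≤ y * z → tauPlus !![x, y; z, w] = 2 - x * w / (y * z) := by
    intro h
    rw [tauPlus_eq_aux, sSup_valSet x y z w hx hy hz hw h]
  have B : y * z ≤ x * w → tauPlus !![x, y; z, w] = 2 - y * z / (x * w) := by
    intro h
    rw [tauPlus_eq_aux, (valSet_swap_sub x y z w).antisymm (valSet_swap_sub y x w z),
      sSup_valSet y x w z hy hx hw hz h]
  have h1 : 0 < x * w := mul_pos hx hw
  have h2 : 0 < y * z := mul_pos hy hz
  refine ⟨A, B, ?_⟩
  rcases le_total (x * w) (y * z) with h | h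
  · rw [A h, min_eq_left]
    exact ((div_le_one h2).mpr h).trans ((one_le_div h1).mpr h)
  · rw [B h, min_eq_right]
    exact ((div_le_one h1).mpr h).trans ((one_le_div h2).mpr h)
end

section
/- Let 0 ≤ a ≤ 1 and 0 ≤ b ≤ 1, let P = [−1,1]² ⊆ ℝ² and S(a,b) = [−a,a]×[−b,b] ⊆ ℝ². Then there exist three points p₁, p₂, p₃ ∈ ℝ² such that S(a,b) ⊆ conv{p₁,p₂,p₃} ⊆ P if and only if (1+a)(1+b) ≤ 2. -/
lemma quadEnd (A B C m c : ℝ) (hA : 0 ≤ A) (h0 : 0 ≤ m) (hc : m ≤ c)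
    (h : 0 ≤ A * m ^ 2 + B * m + C) : 0 ≤ C ∨ 0 ≤ A * c ^ 2 + B * c + C := by
  by_contra hcon
  push Not at hcon
  obtain ⟨h1, h2⟩ := hcon
  rcases eq_or_lt_of_le (h0.trans hc) with h3 | h3
  · have : m = 0 := by linarith
    subst this
    nlinarith
  · have e : c * (A * m ^ 2 + B * m + C) = (c - m) * C + m * (A * c ^ 2 + B * c + C)
        - A * m * c * (c - m) := by ring
    have e1 : 0 ≤ A * m * c * (c - m) := by
      have : 0 ≤ c - m := by linarith
      positivity
    have e2 : 0 ≤ c * (A * m ^ 2 + B * m + C) := by positivity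
    rcases eq_or_lt_of_le h0 with h4 | h4
    · subst h4
      nlinarith
    · nlinarith [mul_pos h4 (neg_pos.2 h2), mul_nonneg (sub_nonneg.2 hc) (neg_pos.2 h1).le]

set_option maxHeartbeats 1000000 in
lemma finq (a b m n L H : ℝ) (ha0 : 0 < a) (ha1 : a ≤ 1) (hb0 : 0 < b) (hb1 : b ≤ 1)
    (hm0 : 0 ≤ m) (hm1 : m ≤ 1 - a) (hn0 : 0 ≤ n) (hn1 : n ≤ 1 - b)
    (hL : 0 < L) (hH : 0 < H) (hL1 : L ≤ m + 1 + a) (hH1 : H ≤ n + 1 + b)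
    (h : m * n ≤ (1 - 2 * a / L - 2 * b / H) * ((m + 2 * a) * (n + 2 * b))) :
    (1 + a) * (1 + b) ≤ 2 := by
  have k1 : 2 * a / (m + 1 + a) ≤ 2 * a / L := by gcongr
  have k2 : 2 * b / (n + 1 + b) ≤ 2 * b / H := by gcongr
  obtain ⟨h', hh'⟩ : ∃ h', h' = 1 - 2 * b / (n + 1 + b) := ⟨_, rfl⟩
  obtain ⟨q, hq⟩ : ∃ q, q = n / (n + 2 * b) := ⟨_, rfl⟩
  have hqe : q * (n + 2 * b) = n := by rw [hq]; field_simp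
  have hhe : h' * (n + 1 + b) = n + 1 - b := by rw [hh']; field_simp; ring
  have hle : h' ≤ 1 - b := by
    have : b ≤ 2 * b / (n + 1 + b) := by rw [le_div_iff₀ (by linarith)]; nlinarith
    linarith
  have hqh : q ≤ h' := by
    have : q = 1 - 2 * b / (n + 2 * b) := by rw [hq]; field_simp; ring
    rw [this, hh']
    have : 2 * b / (n + 1 + b) ≤ 2 * b / (n + 2 * b) := by
      apply div_le_div_of_nonneg_left <;> linarith
    linarith
  have step1 : m * n ≤ (h' - 2 * a / (m + 1 + a)) * ((m + 2 * a) * (n + 2 * b)) := by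
    refine h.trans ?_
    apply mul_le_mul_of_nonneg_right
    · rw [hh']; linarith
    · positivity
  have step2 : m * q ≤ (h' - 2 * a / (m + 1 + a)) * (m + 2 * a) := by
    have : 0 < n + 2 * b := by linarith
    refine le_of_mul_le_mul_right ?_ this
    nlinarith
  have step3 : m * q * (m + 1 + a) ≤ (h' * (m + 1 + a) - 2 * a) * (m + 2 * a) := by
    have hp : 0 < m + 1 + a := by linarith
    have := mul_le_mul_of_nonneg_right step2 hp.le
    have e : (h' - 2 * a / (m + 1 + a)) * (m + 2 * a) * (m + 1 + a) =
      (h' * (m + 1 + a) - 2 * a) * (m + 2 * a) := by field_simp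
    linarith
  have := quadEnd (h' - q) (h' * (1 + 3 * a) - 2 * a - q * (1 + a))
    (h' * (1 + a) * (2 * a) - 4 * a ^ 2) m (1 - a) (by linarith) hm0 hm1 (by nlinarith)
  rcases this with h1 | h1
  · have : 0 ≤ h' * (1 + a) - 2 * a := by
      by_contra hc
      nlinarith
    nlinarith
  · have h2 : q * (1 - a) ≤ (h' - a) * (1 + a) := by nlinarith
    -- multiply by (n+1+b)(n+2b)
    have h3 : n * (n + 1 + b) * (1 - a) ≤ (n + 1 - b - a * (n + 1 + b)) * (n + 2 * b) * (1 + a) := by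
      have hp : 0 ≤ (n + 1 + b) * (n + 2 * b) := by positivity
      have h4 := mul_le_mul_of_nonneg_right h2 hp
      have e1 : q * (1 - a) * ((n + 1 + b) * (n + 2 * b)) = n * (n + 1 + b) * (1 - a) := by
        linear_combination (1 - a) * (n + 1 + b) * hqe
      have e2 : (h' - a) * (1 + a) * ((n + 1 + b) * (n + 2 * b)) =
        (n + 1 - b - a * (n + 1 + b)) * (n + 2 * b) * (1 + a) := by
        linear_combination (1 + a) * (n + 2 * b) * hhe
      linarith
    have := quadEnd ((1 - a) * (1 + a) - (1 - a))
      ((1 - b - a * (1 + b)) * (1 + a) + 2 * b * (1 - a) * (1 + a) - (1 + b) * (1 - a))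
      ((1 - b - a * (1 + b)) * (2 * b) * (1 + a)) n (1 - b)
      (by nlinarith [mul_nonneg ha0.le (sub_nonneg.2 ha1)]) hn0 hn1 (by linarith)
    rcases this with h4 | h4
    · have hp : 0 < 2 * b * (1 + a) := by positivity
      have : 0 ≤ 1 - b - a * (1 + b) := by
        refine le_of_mul_le_mul_left ?_ hp
        linarith
      linarith
    · have hp : 0 < 2 * (a + b) := by positivity
      have : 0 ≤ 1 - a - b - a * b := by
        refine le_of_mul_le_mul_left ?_ hp
        linarith
      linarith

lemma normD (X Y M N s t : ℝ) (hM : 0 ≤ M) (hN : 0 ≤ N) (hX : 0 < X) (hY : 0 < Y) (hMX : M ≤ X)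
    (hNY : N ≤ Y) (hX1 : X ≤ 1) (hY1 : Y ≤ 1) (hs : s * Y ≤ M) (ht : t * X ≤ N)
    (h : (X - s) * (Y - t) ≤ (1 - X) * (1 - Y)) :
    (X * Y - M) * (X * Y - N) ≤ X * Y * ((1 - X) * (1 - Y)) := by
  have hXY : 0 < X * Y := by positivity
  have hR : 0 ≤ (1 - X) * (1 - Y) := mul_nonneg (by linarith) (by linarith)
  rcases le_total M (X * Y) with h1 | h1 <;> rcases le_total N (X * Y) with h2 | h2
  · have : (X * Y - M) * (X * Y - N) ≤ ((X - s) * Y) * ((Y - t) * X) := by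
      apply mul_le_mul <;> nlinarith
    nlinarith
  · nlinarith [mul_nonneg (sub_nonneg.2 h1) (sub_nonneg.2 h2)]
  · nlinarith [mul_nonneg (sub_nonneg.2 h1) (sub_nonneg.2 h2)]
  · have : (M - X * Y) * (N - X * Y) ≤ (X * (1 - Y)) * (Y * (1 - X)) := by
      apply mul_le_mul <;> nlinarith
    nlinarith

lemma core (a b l d r t x y : ℝ) (ha0 : 0 < a) (ha1 : a ≤ 1) (hb0 : 0 < b) (hb1 : b ≤ 1)
    (hl : -1 ≤ l) (hla : l ≤ -a) (hr : r ≤ 1) (hra : a ≤ r)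
    (hd : -1 ≤ d) (hdb : d ≤ -b) (ht : t ≤ 1) (htb : b ≤ t)
    (C1 : (x - l) * (b - d) ≤ (t - d) * (-a - l))
    (C2 : (y - d) * (a - l) ≤ (r - l) * (-b - d))
    (C3 : (a - x) * (t - y) ≤ (t - b) * (r - x)) : (1 + a) * (1 + b) ≤ 2 := by
  have hL : 0 < r - l := by linarith
  have hH : 0 < t - d := by linarith
  have D := normD ((a - l) / (r - l)) ((b - d) / (t - d)) ((-a - l) / (r - l)) ((-b - d) / (t - d))
    ((x - l) / (r - l)) ((y - d) / (t - d)) (div_nonneg (by linarith) hL.le)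
    (div_nonneg (by linarith) hH.le) (div_pos (by linarith) hL) (div_pos (by linarith) hH)
    (by gcongr; linarith) (by gcongr; linarith) (by rw [div_le_one hL]; linarith)
    (by rw [div_le_one hH]; linarith)
    (by rw [div_mul_div_comm, div_le_div_iff₀ (by positivity) hL]; nlinarith)
    (by rw [div_mul_div_comm, div_le_div_iff₀ (by positivity) hH]; nlinarith)
    (by
      have e1 : (1 - (a - l) / (r - l)) * (1 - (b - d) / (t - d)) =
        ((r - a) * (t - b)) / ((r - l) * (t - d)) := by field_simp; ring
      have e2 : ((a - l) / (r - l) - (x - l) / (r - l)) * ((b - d) / (t - d) - (y - d) / (t - d)) =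
        ((a - x) * (b - y)) / ((r - l) * (t - d)) := by field_simp; ring
      rw [e1, e2]
      gcongr ?_ / _
      nlinarith)
  refine finq a b (-a - l) (-b - d) (r - l) (t - d) ha0 ha1 hb0 hb1 (by linarith) (by linarith)
    (by linarith) (by linarith) hL hH (by linarith) (by linarith) ?_
  have eX : -a - l + 2 * a = (r - l) * ((a - l) / (r - l)) := by field_simp; ring
  have eY : -b - d + 2 * b = (t - d) * ((b - d) / (t - d)) := by field_simp; ring
  have eM : -a - l = (r - l) * ((-a - l) / (r - l)) := by field_simp
  have eN : -b - d = (t - d) * ((-b - d) / (t - d)) := by field_simp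
  have ea : 2 * a / (r - l) = (a - l) / (r - l) - (-a - l) / (r - l) := by field_simp; ring
  have eb : 2 * b / (t - d) = (b - d) / (t - d) - (-b - d) / (t - d) := by field_simp; ring
  rw [eX, eY, ea, eb]
  generalize (a - l) / (r - l) = X at *
  generalize (b - d) / (t - d) = Y at *
  generalize (-a - l) / (r - l) = M at *
  generalize (-b - d) / (t - d) = N at *
  rw [eM, eN]
  have key2 : M * N ≤ (1 - (X - M) - (Y - N)) * (X * Y) := by linarith
  have := mul_le_mul_of_nonneg_left key2 (mul_pos hL hH).le
  nlinarith

def Good (a b x1 y1 x2 y2 x3 y3 : ℝ) : Prop :=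
  (∀ α β γ : ℝ, α * x1 + β * y1 ≤ γ → α * x2 + β * y2 ≤ γ → α * x3 + β * y3 ≤ γ →
    ∀ x y, -a ≤ x → x ≤ a → -b ≤ y → y ≤ b → α * x + β * y ≤ γ) ∧
  (-1 ≤ x1 ∧ x1 ≤ 1 ∧ -1 ≤ x2 ∧ x2 ≤ 1 ∧ -1 ≤ x3 ∧ x3 ≤ 1) ∧
  (-1 ≤ y1 ∧ y1 ≤ 1 ∧ -1 ≤ y2 ∧ y2 ≤ 1 ∧ -1 ≤ y3 ∧ y3 ≤ 1)

section
variable {a b x1 y1 x2 y2 x3 y3 : ℝ}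

lemma Good.s12 (h : Good a b x1 y1 x2 y2 x3 y3) : Good a b x2 y2 x1 y1 x3 y3 :=
  ⟨fun α β γ h1 h2 h3 => h.1 α β γ h2 h1 h3, by have := h.2.1; tauto, by have := h.2.2; tauto⟩

lemma Good.s23 (h : Good a b x1 y1 x2 y2 x3 y3) : Good a b x1 y1 x3 y3 x2 y2 :=
  ⟨fun α β γ h1 h2 h3 => h.1 α β γ h1 h3 h2, by have := h.2.1; tauto, by have := h.2.2; tauto⟩

lemma Good.fx (h : Good a b x1 y1 x2 y2 x3 y3) : Good a b (-x1) y1 (-x2) y2 (-x3) y3 := by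
  refine ⟨fun α β γ h1 h2 h3 x y i1 i2 i3 i4 => ?_, ?_, h.2.2⟩
  · have := h.1 (-α) β γ (by linarith) (by linarith) (by linarith) (-x) y (by linarith)
      (by linarith) i3 i4
    linarith
  · obtain ⟨_, ⟨_, _, _, _, _, _⟩, _⟩ := h
    refine ⟨?_, ?_, ?_, ?_, ?_, ?_⟩ <;> linarith

lemma Good.fy (h : Good a b x1 y1 x2 y2 x3 y3) : Good a b x1 (-y1) x2 (-y2) x3 (-y3) := by
  refine ⟨fun α β γ h1 h2 h3 x y i1 i2 i3 i4 => ?_, h.2.1, ?_⟩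
  · have := h.1 α (-β) γ (by linarith) (by linarith) (by linarith) x (-y) i1 i2 (by linarith)
      (by linarith)
    linarith
  · obtain ⟨_, _, ⟨_, _, _, _, _, _⟩⟩ := h
    refine ⟨?_, ?_, ?_, ?_, ?_, ?_⟩ <;> linarith

lemma caseA (ha0 : 0 < a) (ha1 : a ≤ 1) (hb0 : 0 < b) (hb1 : b ≤ 1)
    (h : Good a b x1 y1 x2 y2 x3 y3) (i1 : x1 ≤ x2) (i2 : x1 ≤ x3) (i3 : y1 ≤ y2) (i4 : y1 ≤ y3)
    (i5 : x3 ≤ x2) (i6 : y2 ≤ y3) : (1 + a) * (1 + b) ≤ 2 := by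
  obtain ⟨h, ⟨_, _, _, _, _, _⟩, ⟨_, _, _, _, _, _⟩⟩ := h
  have o : (x3 - x1) * (y2 - y1) ≤ (y3 - y1) * (x2 - x1) := by nlinarith
  have B1 := h (-1) 0 (-x1) (by linarith) (by linarith) (by linarith) (-a) b (by linarith)
    (by linarith) (by linarith) (by linarith)
  have B2 := h 1 0 x2 (by linarith) (by linarith) (by linarith) a b (by linarith)
    (by linarith) (by linarith) (by linarith)
  have B3 := h 0 (-1) (-y1) (by linarith) (by linarith) (by linarith) (-a) (-b) (by linarith)
    (by linarith) (by linarith) (by linarith)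
  have B4 := h 0 1 y3 (by linarith) (by linarith) (by linarith) a b (by linarith)
    (by linarith) (by linarith) (by linarith)
  have C1 := h (-(y3 - y1)) (x3 - x1) (-(y3 - y1) * x1 + (x3 - x1) * y1) (by nlinarith)
    (by nlinarith) (by nlinarith) (-a) b (by linarith) (by linarith) (by linarith) (by linarith)
  have C2 := h (y2 - y1) (-(x2 - x1)) ((y2 - y1) * x1 - (x2 - x1) * y1) (by nlinarith)
    (by nlinarith) (by nlinarith) a (-b) (by linarith) (by linarith) (by linarith) (by linarith)
  have C3 := h (y3 - y2) (x2 - x3) ((y3 - y2) * x2 + (x2 - x3) * y2) (by nlinarith)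
    (by nlinarith) (by nlinarith) a b (by linarith) (by linarith) (by linarith) (by linarith)
  apply core a b x1 y1 x2 y3 x3 y2 <;> first | linarith | nlinarith

lemma caseB (ha0 : 0 < a) (ha1 : a ≤ 1) (hb0 : 0 < b) (hb1 : b ≤ 1)
    (h : Good a b x1 y1 x2 y2 x3 y3) (i1 : x1 ≤ x2) (i2 : x1 ≤ x3) (i3 : y1 ≤ y2) (i4 : y1 ≤ y3)
    (i5 : x3 ≤ x2) (i6 : y3 ≤ y2) : (1 + a) * (1 + b) ≤ 2 := by
  obtain ⟨h, ⟨_, _, _, _, _, _⟩, ⟨_, _, _, _, _, _⟩⟩ := h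
  have B1 := h (-1) 0 (-x1) (by linarith) (by linarith) (by linarith) (-a) b (by linarith)
    (by linarith) (by linarith) (by linarith)
  have B2 := h 1 0 x2 (by linarith) (by linarith) (by linarith) a b (by linarith)
    (by linarith) (by linarith) (by linarith)
  have B3 := h 0 (-1) (-y1) (by linarith) (by linarith) (by linarith) (-a) (-b) (by linarith)
    (by linarith) (by linarith) (by linarith)
  have B4 := h 0 1 y2 (by linarith) (by linarith) (by linarith) a b (by linarith)
    (by linarith) (by linarith) (by linarith)
  rcases le_total ((x3 - x1) * (y2 - y1)) ((y3 - y1) * (x2 - x1)) with o | o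
  · have C2 := h (y2 - y1) (-(x2 - x1)) ((y2 - y1) * x1 - (x2 - x1) * y1) (by nlinarith)
      (by nlinarith) (by nlinarith) a (-b) (by linarith) (by linarith) (by linarith) (by linarith)
    apply core a b x1 y1 x2 y2 x1 y2 <;> first | linarith | nlinarith
  · have C1 := h (-(y2 - y1)) (x2 - x1) (-(y2 - y1) * x1 + (x2 - x1) * y1) (by nlinarith)
      (by nlinarith) (by nlinarith) (-a) b (by linarith) (by linarith) (by linarith) (by linarith)
    apply core a b x1 y1 x2 y2 x2 y1 <;> first | linarith | nlinarith

lemma corner (ha0 : 0 < a) (ha1 : a ≤ 1) (hb0 : 0 < b) (hb1 : b ≤ 1)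
    (h : Good a b x1 y1 x2 y2 x3 y3) (i1 : x1 ≤ x2) (i2 : x1 ≤ x3) (i3 : y1 ≤ y2) (i4 : y1 ≤ y3) :
    (1 + a) * (1 + b) ≤ 2 := by
  rcases le_total x3 x2 with j | j <;> rcases le_total y2 y3 with k | k
  · exact caseA ha0 ha1 hb0 hb1 h i1 i2 i3 i4 j k
  · exact caseB ha0 ha1 hb0 hb1 h i1 i2 i3 i4 j k
  · exact caseB ha0 ha1 hb0 hb1 h.s23 i2 i1 i4 i3 j k
  · exact caseA ha0 ha1 hb0 hb1 h.s23 i2 i1 i4 i3 j k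

lemma sorted (ha0 : 0 < a) (ha1 : a ≤ 1) (hb0 : 0 < b) (hb1 : b ≤ 1)
    (h : Good a b x1 y1 x2 y2 x3 y3) (i1 : x1 ≤ x2) (i2 : x2 ≤ x3) :
    (1 + a) * (1 + b) ≤ 2 := by
  have h' := h.s12.s23.s12.fx
  have h3 := h.s23.s12
  rcases le_total y1 y2 with j | j <;> rcases le_total y1 y3 with k | k <;>
    rcases le_total y2 y3 with m | m
  all_goals first
    | exact corner ha0 ha1 hb0 hb1 h (by linarith) (by linarith) (by linarith) (by linarith)
    | exact corner ha0 ha1 hb0 hb1 h.fy (by linarith) (by linarith) (by linarith) (by linarith)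
    | exact corner ha0 ha1 hb0 hb1 h3.fx (by linarith) (by linarith) (by linarith) (by linarith)
    | exact corner ha0 ha1 hb0 hb1 h3.fx.fy (by linarith) (by linarith) (by linarith) (by linarith)

lemma good_le (ha0 : 0 ≤ a) (ha1 : a ≤ 1) (hb0 : 0 ≤ b) (hb1 : b ≤ 1)
    (h : Good a b x1 y1 x2 y2 x3 y3) : (1 + a) * (1 + b) ≤ 2 := by
  rcases eq_or_lt_of_le ha0 with h0 | ha
  · subst h0; linarith
  rcases eq_or_lt_of_le hb0 with h0 | hb
  · subst h0; linarith
  rcases le_total x1 x2 with i | i <;> rcases le_total x2 x3 with j | j <;>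
    rcases le_total x1 x3 with k | k
  all_goals first
    | exact sorted ha ha1 hb hb1 h (by linarith) (by linarith)
    | exact sorted ha ha1 hb hb1 h.s12 (by linarith) (by linarith)
    | exact sorted ha ha1 hb hb1 h.s23 (by linarith) (by linarith)
    | exact sorted ha ha1 hb hb1 h.s12.s23 (by linarith) (by linarith)
    | exact sorted ha ha1 hb hb1 h.s23.s12 (by linarith) (by linarith)
    | exact sorted ha ha1 hb hb1 h.s12.s23.s12 (by linarith) (by linarith)
end

lemma mem3 (p q r z : ℝ × ℝ) (u v w : ℝ) (hu : 0 ≤ u) (hv : 0 ≤ v) (hw : 0 ≤ w)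
    (h : u + v + w = 1) (hz : z = u • p + v • q + w • r) : z ∈ convexHull ℝ {p, q, r} := by
  have hc := convex_convexHull ℝ ({p, q, r} : Set (ℝ × ℝ))
  have hs := subset_convexHull ℝ ({p, q, r} : Set (ℝ × ℝ))
  have := hc.sum_mem (t := Finset.univ) (w := ![u, v, w]) (z := ![p, q, r])
    (by intro i _; fin_cases i <;> simpa) (by simp [Fin.sum_univ_three, h])
    (by intro i _; fin_cases i <;> apply hs <;> simp)
  simpa [Fin.sum_univ_three, hz] using this

/-- for `0 ≤ a, b ≤ 1`, there exists a triangle `T` with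
`[−a,a]×[−b,b] ⊆ T ⊆ [−1,1]²` if and only if `(1+a)(1+b) ≤ 2`. -/
theorem stmt15 (a b : ℝ) (ha0 : 0 ≤ a) (ha1 : a ≤ 1) (hb0 : 0 ≤ b) (hb1 : b ≤ 1) :
    (∃ p₁ p₂ p₃ : ℝ × ℝ,
      Set.Icc (-a, -b) (a, b) ⊆ convexHull ℝ {p₁, p₂, p₃} ∧
      convexHull ℝ {p₁, p₂, p₃} ⊆ Set.Icc ((-1 : ℝ), (-1 : ℝ)) (1, 1)) ↔
    (1 + a) * (1 + b) ≤ 2 := by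
  constructor
  · rintro ⟨⟨x1, y1⟩, ⟨x2, y2⟩, ⟨x3, y3⟩, h1, h2⟩
    have hs := (subset_convexHull ℝ _).trans h2
    have m1 := hs (show (x1, y1) ∈ ({(x1, y1), (x2, y2), (x3, y3)} : Set (ℝ × ℝ)) by simp)
    have m2 := hs (show (x2, y2) ∈ ({(x1, y1), (x2, y2), (x3, y3)} : Set (ℝ × ℝ)) by simp)
    have m3 := hs (show (x3, y3) ∈ ({(x1, y1), (x2, y2), (x3, y3)} : Set (ℝ × ℝ)) by simp)
    simp only [Set.mem_Icc, Prod.mk_le_mk] at m1 m2 m3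
    refine good_le (x1 := x1) (y1 := y1) (x2 := x2) (y2 := y2) (x3 := x3) (y3 := y3)
      ha0 ha1 hb0 hb1 ⟨?_, by tauto, by tauto⟩
    intro α β γ k1 k2 k3 x y j1 j2 j3 j4
    have hm : (x, y) ∈ convexHull ℝ {(x1, y1), (x2, y2), (x3, y3)} :=
      h1 (by simp only [Set.mem_Icc, Prod.mk_le_mk]; tauto)
    have hcv : Convex ℝ {p : ℝ × ℝ | α * p.1 + β * p.2 ≤ γ} := by
      intro p hp q hq s t hs ht hst
      simp only [Set.mem_ofPred_eq, Prod.fst_add, Prod.snd_add, Prod.smul_fst, Prod.smul_snd,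
        smul_eq_mul] at *
      have e : γ = s * γ + t * γ := by rw [← add_mul, hst, one_mul]
      nlinarith [mul_le_mul_of_nonneg_left hp hs, mul_le_mul_of_nonneg_left hq ht]
    refine convexHull_min ?_ hcv hm
    rintro p (rfl | rfl | rfl) <;> assumption
  · intro h
    obtain ⟨c, hc⟩ : ∃ c, c = (1 - a) / (1 + a) := ⟨_, rfl⟩
    have hce : (1 + a) * (1 + c) = 2 := by rw [hc]; field_simp; ring
    have hbc : b ≤ c := by
      have : 0 < 1 + a := by linarith
      nlinarith
    have hc0 : 0 ≤ c := hb0.trans hbc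
    have hc1 : c ≤ 1 := by nlinarith
    have ha2 : a ^ 2 ≤ 1 := by nlinarith
    have hc2 : c ^ 2 ≤ 1 := by nlinarith
    refine ⟨(-1, -1), (1, -c ^ 2), (-a ^ 2, 1), ?_, ?_⟩
    · rintro ⟨x, y⟩ hxy
      simp only [Set.mem_Icc, Prod.mk_le_mk] at hxy
      obtain ⟨⟨j1, j2⟩, j3, j4⟩ := hxy
      have hD : 0 < 4 - (1 - a ^ 2) * (1 - c ^ 2) := by nlinarith
      obtain ⟨D, hDe⟩ : ∃ D, D = 4 - (1 - a ^ 2) * (1 - c ^ 2) := ⟨_, rfl⟩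
      rw [← hDe] at hD
      have e1 : D = (1 + c ^ 2) * (a + 1) + (1 + a ^ 2) * (c + 1) := by
        rw [hDe]
        linear_combination (-(1 + a * c)) * hce
      refine mem3 _ _ _ _
        ((D - (1 + c ^ 2) * (x + 1) - (1 + a ^ 2) * (y + 1)) / D)
        ((2 * (x + 1) - (1 - a ^ 2) * (y + 1)) / D)
        ((2 * (y + 1) - (1 - c ^ 2) * (x + 1)) / D) ?_ ?_ ?_ ?_ ?_
      · apply div_nonneg _ hD.le
        have : 0 ≤ (1 + c ^ 2) * (a - x) := mul_nonneg (by positivity) (by linarith)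
        have : 0 ≤ (1 + a ^ 2) * (c - y) := mul_nonneg (by positivity) (by linarith)
        nlinarith
      · apply div_nonneg _ hD.le
        have : 0 ≤ (1 - a ^ 2) * (c - y) := mul_nonneg (by linarith) (by linarith)
        have : (1 - a ^ 2) * (1 + c) = 2 * (1 - a) := by linear_combination (1 - a) * hce
        nlinarith
      · apply div_nonneg _ hD.le
        have : 0 ≤ (1 - c ^ 2) * (a - x) := mul_nonneg (by linarith) (by linarith)
        have : (1 - c ^ 2) * (1 + a) = 2 * (1 - c) := by linear_combination (1 - c) * hce
        nlinarith
      · field_simp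
        ring
      · ext
        · simp
          field_simp
          rw [hDe]; ring
        · simp
          field_simp
          rw [hDe]; ring
    · apply convexHull_min _ (convex_Icc _ _)
      rintro p (rfl | rfl | rfl) <;> simp only [Set.mem_Icc, Prod.mk_le_mk] <;>
        refine ⟨⟨?_, ?_⟩, ?_, ?_⟩ <;> nlinarith
end
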